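/- Let ω : ℕ → ℝ be a non-increasing function with 0 < ω(k) ≤ 1 for all k ≥ 1. Define B(ω) = ∑_{ν≥0} 2^{-ν} log(1/ω(2^{ν+1})) and Γ(ω) = ∑_{k≥1} (1/(k(k+1))) log(1/ω(k)). Then Γ(ω) ≤ (1/2) B(ω) ≤ 2 Γ(ω) - log(1/ω(1)). -/

import Mathlib

/-!
Put `L k = log (1 / ω k)`, nonnegative and nondecreasing on `k ≥ 1`. The weights
`1 / (k (k + 1)) = 1 / k - 1 / (k + 1)` telescope to `2⁻⁽ⁿ⁺¹⁾` on the dyadic block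
`2ⁿ ≤ k < 2ⁿ⁺¹`, on which `L (2ⁿ) ≤ L k ≤ L (2ⁿ⁺¹)`. Summing over the blocks,
`∑ L (2ⁿ) / 2ⁿ⁺¹ ≤ Γ ≤ ∑ L (2ⁿ⁺¹) / 2ⁿ⁺¹ = B / 2`, and the left-hand side is
`(L 1 + B / 2) / 2`.
-/

open Filter Finset
open scoped ENNReal

theorem sum_range_sum_Ico_succ {M : Type*} [AddCommMonoid M] (f : ℕ → M) {u : ℕ → ℕ}
    (hu : Monotone u) (N : ℕ) :
    ∑ n ∈ range N, ∑ k ∈ Ico (u n) (u (n + 1)), f k = ∑ k ∈ Ico (u 0) (u N), f k := by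
  induction N with
  | zero => simp
  | succ N ih =>
    rw [sum_range_succ, ih, sum_Ico_consecutive f (hu N.zero_le) (hu N.le_succ)]

section Condensation

variable {L w : ℕ → ℝ≥0∞} {u : ℕ → ℕ}

theorem tsum_sum_Ico_succ (f : ℕ → ℝ≥0∞) (hu : Monotone u) (hu_top : Tendsto u atTop atTop) :
    ∑' n, ∑ k ∈ Ico (u n) (u (n + 1)), f k = ∑' k, f (k + u 0) := by
  refine tendsto_nhds_unique (ENNReal.tendsto_nat_tsum _) ?_
  simp_rw [sum_range_sum_Ico_succ f hu, sum_Ico_eq_sum_range, add_comm (u 0)]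
  exact (ENNReal.tendsto_nat_tsum fun k => f (k + u 0)).comp
    ((tendsto_sub_atTop_nat (u 0)).comp hu_top)

theorem tsum_mul_le_tsum_mul_sum_Ico (hL : MonotoneOn L (Set.Ici (u 0))) (hu : Monotone u)
    (hu_top : Tendsto u atTop atTop) :
    ∑' k, L (k + u 0) * w (k + u 0)
      ≤ ∑' n, L (u (n + 1)) * ∑ k ∈ Ico (u n) (u (n + 1)), w k := by
  rw [← tsum_sum_Ico_succ (fun k => L k * w k) hu hu_top]
  simp only [mul_sum]
  refine ENNReal.tsum_le_tsum fun n => sum_le_sum fun k hk => ?_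
  obtain ⟨hnk, hkn⟩ := mem_Ico.mp hk
  gcongr
  exact hL ((hu n.zero_le).trans hnk) (hu (n + 1).zero_le) hkn.le

theorem tsum_mul_sum_Ico_le_tsum_mul (hL : MonotoneOn L (Set.Ici (u 0))) (hu : Monotone u)
    (hu_top : Tendsto u atTop atTop) :
    ∑' n, L (u n) * ∑ k ∈ Ico (u n) (u (n + 1)), w k
      ≤ ∑' k, L (k + u 0) * w (k + u 0) := by
  rw [← tsum_sum_Ico_succ (fun k => L k * w k) hu hu_top]
  simp only [mul_sum]
  refine ENNReal.tsum_le_tsum fun n => sum_le_sum fun k hk => ?_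
  have hnk : u n ≤ k := (mem_Ico.mp hk).1
  gcongr
  exact hL (hu n.zero_le) ((hu n.zero_le).trans hnk) hnk

end Condensation

theorem sum_Ico_inv_mul_succ {K : Type*} [Field K] [CharZero K] {a b : ℕ} (ha : a ≠ 0)
    (hab : a ≤ b) :
    ∑ k ∈ Ico a b, ((k : K) * (k + 1))⁻¹ = (a : K)⁻¹ - (b : K)⁻¹ := by
  have telescope : ∀ k ∈ Ico a b,
      ((k : K) * (k + 1))⁻¹ = -((k + 1 : ℕ) : K)⁻¹ - -(k : K)⁻¹ := by
    intro k hk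
    have hk₀ : (k : K) ≠ 0 := by
      have := (mem_Ico.mp hk).1
      exact_mod_cast (by omega : k ≠ 0)
    have hk₁ : (k : K) + 1 ≠ 0 := by exact_mod_cast k.succ_ne_zero
    push_cast
    field_simp
    ring
  rw [sum_congr rfl telescope, sum_Ico_sub (fun k : ℕ => -(k : K)⁻¹) hab]
  ring

theorem sum_Ico_two_pow_inv_mul_succ (n : ℕ) :
    ∑ k ∈ Ico (2 ^ n : ℕ) (2 ^ (n + 1)), ((k : ℝ≥0∞) * (k + 1))⁻¹ = (2 ^ (n + 1))⁻¹ := by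
  have ofReal_weight : ∀ k ∈ Ico (2 ^ n : ℕ) (2 ^ (n + 1)),
      ((k : ℝ≥0∞) * (k + 1))⁻¹ = ENNReal.ofReal ((k : ℝ) * (k + 1))⁻¹ := by
    intro k hk
    have hk₀ : 0 < k := (Nat.two_pow_pos n).trans_le (mem_Ico.mp hk).1
    rw [ENNReal.ofReal_inv_of_pos (by positivity)]
    norm_cast
  have real_sum : ∑ k ∈ Ico (2 ^ n : ℕ) (2 ^ (n + 1)), ((k : ℝ) * (k + 1))⁻¹
      = (2 ^ (n + 1))⁻¹ := by
    rw [sum_Ico_inv_mul_succ (by positivity) (Nat.pow_le_pow_right two_pos n.le_succ)]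
    push_cast
    rw [pow_succ]
    field_simp
    norm_num
  rw [sum_congr rfl ofReal_weight, ← ENNReal.ofReal_sum_of_nonneg fun k _ => by positivity,
    real_sum, ENNReal.ofReal_inv_of_pos (by positivity), ENNReal.ofReal_pow zero_le_two,
    ENNReal.ofReal_ofNat]

theorem tsum_div_two_pow_div_two (a : ℕ → ℝ≥0∞) :
    (∑' n, a n / 2 ^ n) / 2 = ∑' n, a n / 2 ^ (n + 1) := by
  rw [div_eq_mul_inv, ← ENNReal.tsum_mul_right]
  refine tsum_congr fun n => ?_
  rw [div_eq_mul_inv, div_eq_mul_inv, mul_assoc, pow_succ,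
    ENNReal.mul_inv (.inr ENNReal.ofNat_ne_top) (.inr two_ne_zero)]

section Dyadic

variable {L : ℕ → ℝ≥0∞}

theorem tsum_div_mul_succ_le_tsum_two_pow (hL : MonotoneOn L (Set.Ici 1)) :
    ∑' k : ℕ, L (k + 1) / ((k + 1) * (k + 2)) ≤ (∑' n : ℕ, L (2 ^ (n + 1)) / 2 ^ n) / 2 := by
  rw [tsum_div_two_pow_div_two]
  have h := tsum_mul_le_tsum_mul_sum_Ico (u := (2 ^ ·)) (w := fun k => ((k : ℝ≥0∞) * (k + 1))⁻¹)
    hL (pow_right_mono₀ one_le_two) (tendsto_pow_atTop_atTop_of_one_lt one_lt_two)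
  simpa only [sum_Ico_two_pow_inv_mul_succ, ← div_eq_mul_inv, pow_zero, Nat.cast_add, Nat.cast_one,
    add_assoc, one_add_one_eq_two] using h

theorem tsum_two_pow_div_two_le_tsum_div_mul_succ (hL : MonotoneOn L (Set.Ici 1)) :
    (∑' n : ℕ, L (2 ^ n) / 2 ^ n) / 2 ≤ ∑' k : ℕ, L (k + 1) / ((k + 1) * (k + 2)) := by
  rw [tsum_div_two_pow_div_two]
  have h := tsum_mul_sum_Ico_le_tsum_mul (u := (2 ^ ·)) (w := fun k => ((k : ℝ≥0∞) * (k + 1))⁻¹)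
    hL (pow_right_mono₀ one_le_two) (tendsto_pow_atTop_atTop_of_one_lt one_lt_two)
  simpa only [sum_Ico_two_pow_inv_mul_succ, ← div_eq_mul_inv, pow_zero, Nat.cast_add, Nat.cast_one,
    add_assoc, one_add_one_eq_two] using h

theorem tsum_two_pow_add_le_two_mul_tsum_div_mul_succ (hL : MonotoneOn L (Set.Ici 1)) :
    (∑' n : ℕ, L (2 ^ (n + 1)) / 2 ^ n) / 2 + L 1
      ≤ 2 * ∑' k : ℕ, L (k + 1) / ((k + 1) * (k + 2)) :=
  calc (∑' n : ℕ, L (2 ^ (n + 1)) / 2 ^ n) / 2 + L 1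
      = ∑' n : ℕ, L (2 ^ n) / 2 ^ n := by
        rw [tsum_div_two_pow_div_two, tsum_eq_zero_add' (f := fun n => L (2 ^ n) / 2 ^ n)
          ENNReal.summable, pow_zero, pow_zero, div_one, add_comm]
    _ = 2 * ((∑' n : ℕ, L (2 ^ n) / 2 ^ n) / 2) :=
        (ENNReal.mul_div_cancel two_ne_zero ENNReal.ofNat_ne_top).symm
    _ ≤ 2 * ∑' k : ℕ, L (k + 1) / ((k + 1) * (k + 2)) := by
        gcongr
        exact tsum_two_pow_div_two_le_tsum_div_mul_succ hL

end Dyadic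

theorem monotoneOn_ofReal_log_one_div {α : Type*} [Preorder α] {ω : α → ℝ} {s : Set α}
    (hanti : AntitoneOn ω s) (hpos : ∀ a ∈ s, 0 < ω a) :
    MonotoneOn (fun a => ENNReal.ofReal (Real.log (1 / ω a))) s := by
  intro a ha b hb hab
  have hωb := hpos b hb
  have hωa := hpos a ha
  dsimp only
  gcongr
  exact hanti ha hb hab

/-- For a non-increasing `ω : ℕ → ℝ` with `0 < ω k ≤ 1` for `k ≥ 1`,
with `B(ω) = ∑_{ν≥0} 2^{-ν} log(1/ω(2^{ν+1}))` and
`Γ(ω) = ∑_{k≥1} log(1/ω(k))/(k(k+1))` (series in `ℝ≥0∞`), one has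
`Γ(ω) ≤ (1/2)·B(ω) ≤ 2·Γ(ω) − log(1/ω 1)`. -/
theorem stmt_1 (ω : ℕ → ℝ) (hanti : ∀ a b : ℕ, a ≤ b → ω b ≤ ω a)
    (hpos : ∀ k : ℕ, 1 ≤ k → 0 < ω k) (hle : ∀ k : ℕ, 1 ≤ k → ω k ≤ 1) :
    (∑' k : ℕ, ENNReal.ofReal (Real.log (1 / ω (k + 1)) / ((k + 1) * (k + 2))))
      ≤ (∑' ν : ℕ, ENNReal.ofReal (Real.log (1 / ω (2 ^ (ν + 1))) / 2 ^ ν)) / 2 ∧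
    (∑' ν : ℕ, ENNReal.ofReal (Real.log (1 / ω (2 ^ (ν + 1))) / 2 ^ ν)) / 2
      ≤ 2 * (∑' k : ℕ, ENNReal.ofReal (Real.log (1 / ω (k + 1)) / ((k + 1) * (k + 2))))
          - ENNReal.ofReal (Real.log (1 / ω 1)) := by
  set L : ℕ → ℝ≥0∞ := fun k => ENNReal.ofReal (Real.log (1 / ω k))
  have hL : MonotoneOn L (Set.Ici 1) :=
    monotoneOn_ofReal_log_one_div (fun a _ b _ hab => hanti a b hab) hpos
  have Γ_term (k : ℕ) : ENNReal.ofReal (Real.log (1 / ω (k + 1)) / ((k + 1) * (k + 2)))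
      = L (k + 1) / ((k + 1) * (k + 2)) := by
    rw [ENNReal.ofReal_div_of_pos (by positivity)]
    norm_cast
  have B_term (n : ℕ) : ENNReal.ofReal (Real.log (1 / ω (2 ^ (n + 1))) / 2 ^ n)
      = L (2 ^ (n + 1)) / 2 ^ n := by
    rw [ENNReal.ofReal_div_of_pos (by positivity), ENNReal.ofReal_pow zero_le_two,
      ENNReal.ofReal_ofNat]
  simp only [Γ_term, B_term]
  exact ⟨tsum_div_mul_succ_le_tsum_two_pow hL, ENNReal.le_sub_of_add_le_right
    ENNReal.ofReal_ne_top (tsum_two_pow_add_le_two_mul_tsum_div_mul_succ hL)⟩
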